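/- Let α_1, …, α_{n+1} be nonnegative integers, all even, and set β_j := (α_j + 1)/2 for each j. Then ∫_{S^n} (ω^1)^{α_1} (ω^2)^{α_2} ⋯ (ω^{n+1})^{α_{n+1}} dσ(ω) = 2 Γ(β_1) Γ(β_2) ⋯ Γ(β_{n+1}) / Γ(β_1 + β_2 + ⋯ + β_{n+1}), where Γ is the Gamma function. -/

import Mathlib

open MeasureTheory

lemma aux_one (k : ℕ) : ∫ r in Set.Ioi (0:ℝ), r ^ k * Real.exp (-r ^ 2) =
    1 / 2 * Real.Gamma (((k : ℝ) + 1) / 2) := by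
  have h := integral_rpow_mul_exp_neg_rpow (p := 2) (q := k) (by norm_num)
    (by have : (0:ℝ) ≤ k := k.cast_nonneg
        linarith)
  rw [← h]
  refine setIntegral_congr_fun measurableSet_Ioi (fun x _ => ?_)
  simp only [Real.rpow_natCast, Real.rpow_two]

lemma aux_line (k : ℕ) (hk : Even k) : ∫ x : ℝ, x ^ k * Real.exp (-x ^ 2) =
    Real.Gamma (((k : ℝ) + 1) / 2) := by
  have h := integral_comp_abs (f := fun r => r ^ k * Real.exp (-r ^ 2))
  simp only [hk.pow_abs, sq_abs] at h
  rw [h, aux_one]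
  ring

lemma aux_space (m : ℕ) (α : Fin m → ℕ) (heven : ∀ j, Even (α j)) :
    ∫ x : EuclideanSpace ℝ (Fin m), (∏ j, x j ^ α j) * Real.exp (-‖x‖ ^ 2) =
      ∏ j, Real.Gamma (((α j : ℝ) + 1) / 2) := by
  rw [← (PiLp.volume_preserving_toLp (Fin m)).integral_comp
    (MeasurableEquiv.toLp 2 _).measurableEmbedding]
  simp_rw [← fun j => aux_line (α j) (heven j)]
  rw [← integral_fintype_prod_volume_eq_prod (fun j (x : ℝ) => x ^ α j * Real.exp (-x ^ 2))]
  congr 1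
  ext x
  rw [Finset.prod_mul_distrib, ← Real.exp_sum, EuclideanSpace.norm_sq_eq]
  simp

lemma aux_polar (n : ℕ) (α : Fin (n + 1) → ℕ) :
    ∫ x : EuclideanSpace ℝ (Fin (n + 1)), (∏ j, x j ^ α j) * Real.exp (-‖x‖ ^ 2) =
      (∫ ω : Metric.sphere (0 : EuclideanSpace ℝ (Fin (n + 1))) 1,
        (∏ j, ((ω : EuclideanSpace ℝ (Fin (n + 1))) j) ^ α j)
      ∂((volume : Measure (EuclideanSpace ℝ (Fin (n + 1)))).toSphere)) *
      ∫ r in Set.Ioi (0:ℝ), r ^ (n + ∑ j, α j) * Real.exp (-r ^ 2) := by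
  have : MeasurableSingletonClass (EuclideanSpace ℝ (Fin (n + 1))) :=
    OpensMeasurableSpace.toMeasurableSingletonClass
  have hd : Module.finrank ℝ (EuclideanSpace ℝ (Fin (n + 1))) - 1 = n := by simp
  calc
    _ = ∫ x : ({(0)}ᶜ : Set (EuclideanSpace ℝ (Fin (n + 1)))), (∏ j, x.1 j ^ α j) * Real.exp (-‖x.1‖ ^ 2)
        ∂((volume : Measure (EuclideanSpace ℝ (Fin (n + 1)))).comap (↑)) := by
      rw [integral_subtype_comap (measurableSet_singleton _).compl
        fun x : (EuclideanSpace ℝ (Fin (n + 1))) ↦ (∏ j, x j ^ α j) * Real.exp (-‖x‖ ^ 2), restrict_compl_singleton]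
    _ = ∫ p, (∏ j, (p.1 : (EuclideanSpace ℝ (Fin (n + 1)))) j ^ α j) * ((p.2 : ℝ) ^ (∑ j, α j) * Real.exp (-(p.2 : ℝ) ^ 2))
        ∂(volume : Measure (EuclideanSpace ℝ (Fin (n + 1)))).toSphere.prod (.volumeIoiPow (Module.finrank ℝ (EuclideanSpace ℝ (Fin (n + 1))) - 1)) := by
      rw [← (volume : Measure (EuclideanSpace ℝ (Fin (n + 1)))).measurePreserving_homeomorphUnitSphereProd.integral_comp
        (Homeomorph.measurableEmbedding _)]
      congr 1
      ext x
      have hx : ‖x.1‖ ≠ 0 := norm_ne_zero_iff.2 x.2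
      simp only [homeomorphUnitSphereProd_apply_fst_coe, homeomorphUnitSphereProd_apply_snd_coe,
        PiLp.smul_apply, smul_eq_mul, mul_pow, Finset.prod_mul_distrib, Finset.prod_pow_eq_pow_sum]
      rw [inv_pow]
      field_simp
    _ = _ := by
      rw [hd]
      rw [integral_prod_mul (fun ω : Metric.sphere (0 : (EuclideanSpace ℝ (Fin (n + 1)))) 1 => ∏ j, (ω : (EuclideanSpace ℝ (Fin (n + 1)))) j ^ α j)
        (fun r : Set.Ioi (0:ℝ) => (r : ℝ) ^ (∑ j, α j) * Real.exp (-(r : ℝ) ^ 2))]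
      congr 1
      simp only [Measure.volumeIoiPow, ENNReal.ofReal]
      rw [integral_withDensity_eq_integral_smul,
        integral_subtype_comap measurableSet_Ioi fun a : ℝ ↦ Real.toNNReal (a ^ n) •
          (a ^ (∑ j, α j) * Real.exp (-a ^ 2))]
      · refine setIntegral_congr_fun measurableSet_Ioi fun x hx ↦ ?_
        rw [NNReal.smul_def, Real.coe_toNNReal _ (pow_nonneg (le_of_lt hx) _), smul_eq_mul,
          pow_add, mul_assoc]
      · exact (measurable_subtype_coe.pow_const _).real_toNNReal


/-- Even-exponent case of Folland's sphere-moment formula: if all exponents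
`α j` are even, then, with `β j := (α j + 1)/2`, the monomial moment of the
surface measure on the unit sphere `S^n ⊂ ℝ^{n+1}` equals
`2 Γ(β 1) ⋯ Γ(β (n+1)) / Γ(β 1 + ⋯ + β (n+1))`. -/
theorem sphere_moment_of_even (n : ℕ) (hn : 1 ≤ n) (α : Fin (n + 1) → ℕ)
    (heven : ∀ j, Even (α j)) (β : Fin (n + 1) → ℝ)
    (hβ : ∀ j, β j = ((α j : ℝ) + 1) / 2) :
    ∫ ω : Metric.sphere (0 : EuclideanSpace ℝ (Fin (n + 1))) 1,
        (∏ j, ((ω : EuclideanSpace ℝ (Fin (n + 1))) j) ^ α j)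
      ∂((volume : Measure (EuclideanSpace ℝ (Fin (n + 1)))).toSphere)
      = (2 * ∏ j, Real.Gamma (β j)) / Real.Gamma (∑ j, β j) := by
  have h := aux_polar n α
  rw [aux_space _ α heven, aux_one] at h
  have hs : (((n + ∑ j, α j : ℕ) : ℝ) + 1) / 2 = ∑ j, β j := by
    simp only [hβ]
    rw [← Finset.sum_div, Finset.sum_add_distrib]
    simp
    ring
  rw [hs] at h
  have hpos : 0 < Real.Gamma (∑ j, β j) := by
    apply Real.Gamma_pos_of_pos
    rw [← hs]
    positivity
  rw [eq_div_iff hpos.ne']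
  simp only [hβ] at h ⊢
  rw [h]
  ring
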